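/- arXiv:math/0406062 — 2 statements merged into one kernel-verified Lean document; each statement's English description precedes it below -/
import Mathlib

section
/- Let R be a ring with a central invertible element q, and let X be an n×n q-generic matrix over R. Let (i_1,…,i_n) be any tuple of elements of {1,…,n} (not necessarily distinct), and let A be the n×n matrix whose s-th row is the i_s-th row of X. Then det_q A = (−q)^{−ℓ(i_1,…,i_n)}·det_q X if i_1,…,i_n are pairwise distinct, and det_q A = 0 if some row index is repeated. Here ℓ(i_1,…,i_n) is the number of inversions of the tuple. -/
/-!
Everything reduces to interchanging two neighbouring rows. Fix neighbouring positions `s`, `t = s + 1`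
and pair each permutation `σ` satisfying `σ s < σ t` with `σ ∘ (s t)`, which has exactly one more
inversion. The two summands of the quantum determinant differ only in their two middle factors, so
their sum contains the `2 × 2` quantum minor (`qMinor`) of the rows `i s`, `i t` and the columns
`σ s < σ t`. The defining relations of a `q`-generic matrix say that this minor vanishes if the rows
coincide (`qMinor_self`) and picks up the factor `(-q)⁻¹` if the rows come in decreasing order
(`qMinor_swap`).

Hence `qdet` vanishes when `i s = i t`, and sorting a descent `i t < i s` pulls out a factor `(-q)⁻¹`
and removes exactly one inversion of `i`. The theorem follows by induction on the number of
inversions: a tuple without a descent either has two equal neighbours or is strictly increasing, and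
in the latter case it is the identity.
-/

/-- The number of inversions (the "length" `ℓ`) of a tuple. -/
def tupleInv {m : ℕ} {α : Type*} [LinearOrder α] (f : Fin m → α) : ℕ :=
  ((Finset.univ : Finset (Fin m × Fin m)).filter fun p => p.1 < p.2 ∧ f p.2 < f p.1).card

/-- The quantum determinant `det_q A = ∑_σ (-q)^{-ℓ(σ)} a_{1,σ1} ⋯ a_{n,σn}`. -/
def qdet {R : Type*} [Ring R] {n : ℕ} (q : Rˣ) (A : Matrix (Fin n) (Fin n) R) : R :=
  ∑ σ : Equiv.Perm (Fin n),
    (((-q) ^ (-(tupleInv fun i => σ i : ℤ)) : Rˣ) : R) * (List.ofFn fun i => A i (σ i)).prod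

/-- A matrix is `q`-generic if its entries satisfy the standard quantum relations. -/
def qGeneric {R : Type*} [Ring R] {n m : ℕ} (q : Rˣ) (X : Matrix (Fin n) (Fin m) R) : Prop :=
  (∀ (k : Fin n) (i j : Fin m), i < j → X k j * X k i = (q : R) * (X k i * X k j)) ∧
  (∀ (i j : Fin n) (k : Fin m), i < j → X j k * X i k = (q : R) * (X i k * X j k)) ∧
  (∀ (i j : Fin n) (k l : Fin m), i < j → k < l → X j k * X i l = X i l * X j k) ∧
  (∀ (i j : Fin n) (k l : Fin m), i < j → k < l →
    X j l * X i k = X i k * X j l + ((q : R) - ((q⁻¹ : Rˣ) : R)) * (X i l * X j k))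

open Equiv

/-- Exchanging the values of an ascent at neighbouring positions creates exactly one inversion. -/
lemma tupleInv_swap {n : ℕ} {α : Type*} [LinearOrder α] (f : Fin n → α) {s t : Fin n}
    (hst : s.val + 1 = t.val) (h : f s < f t) :
    tupleInv (fun x => f (swap s t x)) = tupleInv f + 1 := by
  classical
  have hlt : s < t := by rw [Fin.lt_def]; omega
  unfold tupleInv
  have key : ((Finset.univ : Finset (Fin n × Fin n)).filter
        fun p => p.1 < p.2 ∧ f (swap s t p.2) < f (swap s t p.1)) =
      insert (s, t) (((Finset.univ : Finset (Fin n × Fin n)).filter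
        fun p => p.1 < p.2 ∧ f p.2 < f p.1).map
          (Equiv.prodCongr (swap s t) (swap s t)).toEmbedding) := by
    ext ⟨x, y⟩
    simp only [Finset.mem_insert, Finset.mem_map_equiv, Finset.mem_filter, Finset.mem_univ,
      true_and, Equiv.prodCongr_symm, Equiv.prodCongr_apply, Prod.map_apply, symm_swap,
      Prod.mk.injEq]
    by_cases hx : x = s ∧ y = t
    · obtain ⟨rfl, rfl⟩ := hx
      simp [h, hlt]
    · simp only [hx, false_or]
      refine and_congr_left fun hf => ?_
      have hne : x ≠ y := by rintro rfl; exact lt_irrefl _ hf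
      by_cases hx' : x = t ∧ y = s
      · obtain ⟨rfl, rfl⟩ := hx'
        simp at hf
        exact absurd hf h.asymm
      -- On every pair other than `{s, t}`, exchanging two neighbours preserves the order.
      · simp only [swap_apply_def, Fin.lt_def, Fin.ext_iff] at *
        split_ifs <;> omega
  rw [key, Finset.card_insert_of_notMem, Finset.card_map]
  simp [Finset.mem_map_equiv, hlt.le]

/-- Two neighbouring factors can be isolated in an ordered product; the outer parts `P`, `S` do not
depend on the values of these two factors. -/
lemma prod_ofFn_split {R : Type*} [Ring R] {n : ℕ} {s t : Fin n} (hst : s.val + 1 = t.val) :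
    ∃ P S : (Fin n → R) → R,
      (∀ g, (List.ofFn g).prod = P g * (g s * g t) * S g) ∧
      ∀ g g' : Fin n → R, (∀ x, x ≠ s → x ≠ t → g x = g' x) → P g = P g' ∧ S g = S g' := by
  refine ⟨fun g => ((List.ofFn g).take s.val).prod,
    fun g => ((List.ofFn g).drop (s.val + 2)).prod, fun g => ?_, fun g g' h => ⟨?_, ?_⟩⟩
  · have h1 : s.val < (List.ofFn g).length := by simp
    have h2 : s.val + 1 < (List.ofFn g).length := by simp; omega
    have ht : (⟨s.val + 1, by omega⟩ : Fin n) = t := Fin.ext hst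
    conv_lhs => rw [← List.take_append_drop s.val (List.ofFn g), List.drop_eq_getElem_cons h1,
      List.drop_eq_getElem_cons h2]
    simp only [List.prod_append, List.prod_cons, List.getElem_ofFn, ht, mul_assoc]
  · refine congrArg List.prod ?_
    refine List.ext_getElem (by simp) fun k hk _ => ?_
    simp only [List.length_take, List.length_ofFn] at hk
    simp only [List.getElem_take, List.getElem_ofFn]
    exact h _ (by simp only [ne_eq, Fin.ext_iff]; omega)
      (by simp only [ne_eq, Fin.ext_iff]; omega)
  · refine congrArg List.prod ?_
    refine List.ext_getElem (by simp) fun k hk _ => ?_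
    simp only [List.length_drop, List.length_ofFn] at hk
    simp only [List.getElem_drop, List.getElem_ofFn]
    exact h _ (by simp only [ne_eq, Fin.ext_iff]; omega)
      (by simp only [ne_eq, Fin.ext_iff]; omega)

section

variable {R : Type*} [Ring R] {n : ℕ}

/-- The `2 × 2` quantum minor of `X` on the rows `a`, `b` (in this order) and columns `k`, `l`. -/
def qMinor (q : Rˣ) (X : Matrix (Fin n) (Fin n) R) (a b k l : Fin n) : R :=
  X a k * X b l + (((-q)⁻¹ : Rˣ) : R) * (X a l * X b k)

lemma qMinor_self {q : Rˣ} {X : Matrix (Fin n) (Fin n) R} (hX : qGeneric q X) (a : Fin n)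
    {k l : Fin n} (hkl : k < l) : qMinor q X a a k l = 0 := by
  simp [qMinor, hX.1 a k l hkl, inv_neg]

lemma qMinor_swap {q : Rˣ} {X : Matrix (Fin n) (Fin n) R} (hX : qGeneric q X) {a b : Fin n}
    (hba : b < a) {k l : Fin n} (hkl : k < l) :
    qMinor q X a b k l = (((-q)⁻¹ : Rˣ) : R) * qMinor q X b a k l := by
  simp only [qMinor, hX.2.2.1 b a k l hba hkl, hX.2.2.2 b a k l hba hkl, inv_neg, Units.val_neg,
    mul_add, sub_mul, neg_mul, mul_neg, neg_neg, mul_sub, Units.inv_mul_cancel_left]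
  abel

/-- The quantum determinant as a sum over the permutations with an ascent at `s`, each summand
containing a `2 × 2` quantum minor. The same outer factors serve the tuple `i` and any tuple `i'`
agreeing with it outside `s` and `t`. -/
lemma qdet_rows_eq {q : Rˣ} (hq : ∀ r : R, (q : R) * r = r * (q : R))
    (X : Matrix (Fin n) (Fin n) R) (i : Fin n → Fin n) {s t : Fin n}
    (hst : s.val + 1 = t.val) :
    ∃ c P S : Perm (Fin n) → R, ∀ i' : Fin n → Fin n, (∀ x, x ≠ s → x ≠ t → i' x = i x) →
      qdet q (Matrix.of fun s t => X (i' s) t) =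
        ∑ σ : Perm (Fin n) with σ s < σ t,
          c σ * (P σ * qMinor q X (i' s) (i' t) (σ s) (σ t) * S σ) := by
  obtain ⟨P, S, hprod, hPS⟩ := prod_ofFn_split (R := R) hst
  have hne : s ≠ t := by rintro rfl; omega
  have hcomm : ∀ r : R, (((-q)⁻¹ : Rˣ) : R) * r = r * (((-q)⁻¹ : Rˣ) : R) := by
    intro r
    have : Commute (((-q : Rˣ)) : R) r := by
      rw [Units.val_neg]; exact Commute.neg_left (hq r)
    exact this.units_inv_left
  refine ⟨fun σ => (((-q) ^ (-(tupleInv fun i => σ i : ℤ)) : Rˣ) : R),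
    fun σ => P fun x => X (i x) (σ x), fun σ => S fun x => X (i x) (σ x), fun i' hi' => ?_⟩
  have hsplit := Finset.sum_filter_add_sum_filter_not (Finset.univ : Finset (Perm (Fin n)))
    (fun σ => σ s < σ t) (fun σ => (((-q) ^ (-(tupleInv fun i => σ i : ℤ)) : Rˣ) : R) *
      (List.ofFn fun x => X (i' x) (σ x)).prod)
  have hre : ∑ σ : Perm (Fin n) with ¬ σ s < σ t,
        (((-q) ^ (-(tupleInv fun i => σ i : ℤ)) : Rˣ) : R) *
          (List.ofFn fun x => X (i' x) (σ x)).prod =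
      ∑ σ : Perm (Fin n) with σ s < σ t,
        (((-q) ^ (-(tupleInv fun i => (σ * swap s t) i : ℤ)) : Rˣ) : R) *
          (List.ofFn fun x => X (i' x) ((σ * swap s t) x)).prod := by
    symm
    refine Finset.sum_equiv (Equiv.mulRight (swap s t)) (fun σ => ?_) (fun σ _ => rfl)
    have : σ s ≠ σ t := σ.injective.ne hne
    simp only [Finset.mem_filter, Finset.mem_univ, true_and, Equiv.coe_mulRight, Perm.mul_apply,
      swap_apply_left, swap_apply_right, not_lt]
    exact ⟨le_of_lt, fun h => lt_of_le_of_ne h this⟩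
  unfold qdet
  simp only [Matrix.of_apply]
  rw [← hsplit, hre, ← Finset.sum_add_distrib]
  refine Finset.sum_congr rfl fun σ hσ => ?_
  simp only [Finset.mem_filter, Finset.mem_univ, true_and] at hσ
  have hinv : tupleInv (fun x => (σ * swap s t) x) = tupleInv (fun x => σ x) + 1 :=
    tupleInv_swap (fun x => σ x) hst hσ
  obtain ⟨hP, hS⟩ := hPS (fun x => X (i' x) (σ x)) (fun x => X (i x) (σ x))
    (fun x h1 h2 => by simp only [hi' x h1 h2])
  obtain ⟨hP', hS'⟩ := hPS (fun x => X (i' x) ((σ * swap s t) x)) (fun x => X (i x) (σ x))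
    (fun x h1 h2 => by simp only [hi' x h1 h2, Perm.mul_apply, swap_apply_of_ne_of_ne h1 h2])
  have hpow : (-q) ^ (-((tupleInv (fun x => σ x) + 1 : ℕ) : ℤ)) =
      (-q) ^ (-(tupleInv (fun x => σ x) : ℤ)) * (-q)⁻¹ := by
    rw [← zpow_sub_one]; congr 1; push_cast; ring
  rw [hinv, hpow, hprod, hprod, hP, hS, hP', hS']
  simp only [Perm.mul_apply, swap_apply_left, swap_apply_right, qMinor, Units.val_mul]
  rw [mul_assoc (Units.val _) (Units.val _), ← mul_add]
  congr 1
  rw [mul_add, add_mul]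
  congr 1
  rw [← mul_assoc, ← mul_assoc, hcomm]
  simp only [mul_assoc]

lemma qdet_rows_eq_zero {q : Rˣ} (hq : ∀ r : R, (q : R) * r = r * (q : R))
    {X : Matrix (Fin n) (Fin n) R} (hX : qGeneric q X) (i : Fin n → Fin n) {s t : Fin n}
    (hst : s.val + 1 = t.val) (h : i s = i t) :
    qdet q (Matrix.of fun s t => X (i s) t) = 0 := by
  obtain ⟨c, P, S, hc⟩ := qdet_rows_eq hq X i hst
  rw [hc i fun _ _ _ => rfl]
  refine Finset.sum_eq_zero fun σ hσ => ?_
  rw [h, qMinor_self hX _ (Finset.mem_filter.1 hσ).2]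
  simp

lemma qdet_rows_swap {q : Rˣ} (hq : ∀ r : R, (q : R) * r = r * (q : R))
    {X : Matrix (Fin n) (Fin n) R} (hX : qGeneric q X) (i : Fin n → Fin n) {s t : Fin n}
    (hst : s.val + 1 = t.val) (h : i t < i s) :
    qdet q (Matrix.of fun x y => X (i x) y) =
      (((-q)⁻¹ : Rˣ) : R) * qdet q (Matrix.of fun x y => X (i (swap s t x)) y) := by
  obtain ⟨c, P, S, hc⟩ := qdet_rows_eq hq X i hst
  have hcomm : ∀ r : R, Commute (((-q)⁻¹ : Rˣ) : R) r := by
    intro r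
    have : Commute (((-q : Rˣ)) : R) r := by
      rw [Units.val_neg]; exact Commute.neg_left (hq r)
    exact this.units_inv_left
  rw [hc i fun _ _ _ => rfl, hc (fun x => i (swap s t x))
    fun x h1 h2 => by rw [swap_apply_of_ne_of_ne h1 h2], Finset.mul_sum]
  refine Finset.sum_congr rfl fun σ hσ => ?_
  rw [qMinor_swap hX h (Finset.mem_filter.1 hσ).2, swap_apply_left, swap_apply_right]
  rw [(hcomm (P σ)).symm.left_comm, mul_assoc, (hcomm (c σ)).symm.left_comm]

end

/-- The `q`-alternating property: if `A` is built by choosing rows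
`i 0, …, i (n-1)` of a `q`-generic `n×n` matrix `X`, then `det_q A = (-q)^{-ℓ(i)} det_q X`
when the chosen rows are pairwise distinct, and `det_q A = 0` otherwise. -/
theorem stmt5 {R : Type*} [Ring R] (q : Rˣ) (hq : ∀ r : R, (q : R) * r = r * (q : R))
    {n : ℕ} (X : Matrix (Fin n) (Fin n) R) (hX : qGeneric q X) (i : Fin n → Fin n) :
    (Function.Injective i →
      qdet q (Matrix.of fun s t => X (i s) t) =
        (((-q) ^ (-(tupleInv i : ℤ)) : Rˣ) : R) * qdet q X) ∧
    (¬ Function.Injective i → qdet q (Matrix.of fun s t => X (i s) t) = 0) := by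
  induction hN : tupleInv i using Nat.strong_induction_on generalizing i with
  | _ N ih =>
  subst hN
  by_cases hdesc : ∃ s t : Fin n, s.val + 1 = t.val ∧ i t < i s
  · obtain ⟨s, t, hst, hlt⟩ := hdesc
    have hinv : tupleInv i = tupleInv (fun x => i (swap s t x)) + 1 := by
      simpa using tupleInv_swap (fun x => i (swap s t x)) hst (by simpa using hlt)
    have hinj : Function.Injective (fun x => i (swap s t x)) ↔ Function.Injective i :=
      Function.Injective.of_comp_iff' i (swap s t).bijective
    obtain ⟨h1, h2⟩ := ih _ (by omega) (fun x => i (swap s t x)) rfl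
    rw [qdet_rows_swap hq hX i hst hlt]
    refine ⟨fun hi => ?_, fun hi => ?_⟩
    · rw [h1 (hinj.2 hi), ← mul_assoc, ← Units.val_mul, ← zpow_neg_one, ← zpow_add, hinv]
      congr 4
      push_cast
      ring
    · rw [h2 (hinj.not.2 hi), mul_zero]
  by_cases heq : ∃ s t : Fin n, s.val + 1 = t.val ∧ i s = i t
  · obtain ⟨s, t, hst, he⟩ := heq
    refine ⟨fun hi => ?_, fun _ => qdet_rows_eq_zero hq hX i hst he⟩
    have := congrArg Fin.val (hi he)
    omega
  have hmono : StrictMono i := by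
    cases n with
    | zero => exact fun a => a.elim0
    | succ m =>
      refine Fin.strictMono_iff_lt_succ.2 fun k => ?_
      push Not at hdesc heq
      exact lt_of_le_of_ne (hdesc k.castSucc k.succ (by simp)) (heq k.castSucc k.succ (by simp))
  have hid : i = id := by
    refine (StrictMono.range_inj hmono strictMono_id).1 ?_
    rw [(Finite.injective_iff_surjective.1 hmono.injective).range_eq, Set.range_id]
  subst hid
  have h0 : tupleInv (id : Fin n → Fin n) = 0 := by
    simp only [tupleInv, Finset.card_eq_zero, Finset.filter_eq_empty_iff]
    exact fun p _ h => h.1.asymm h.2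
  refine ⟨fun _ => ?_, fun h => absurd Function.injective_id h⟩
  rw [h0]
  simp only [Nat.cast_zero, neg_zero, zpow_zero, Units.val_one, one_mul]
  rfl
end

section
/- Let R be a ring with a central invertible element q, and let X be an n×m q-generic matrix over R. Let (i_1,…,i_m) be a tuple of elements of {1,…,n} (not necessarily distinct or ordered) and let A be the m×m matrix whose s-th row is the i_s-th row of X. Suppose that for each s = 1,…,m−1 the (m−s)×(m−s) submatrix of A on rows {s+1,…,m} and columns {s+1,…,m} is invertible, so that each principal quasideterminant below is defined. Then the quantum determinant of A factors as the ordered product of successive quasideterminants: det_q A = |A|_{1,1} · |A^{1,1}|_{2,2} · |A^{{1,2},{1,2}}|_{3,3} ⋯ a_{m,m}, where A^{{1,…,s−1},{1,…,s−1}} denotes A with rows 1,…,s−1 and columns 1,…,s−1 deleted, and the quasideterminant position (s,s) refers to the entry a_{s,s} of A. -/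
/-- The `(i,j)`-quasideterminant of `A`, computed with an explicitly given inverse `C`
of the submatrix `A^{ij}` (`A` with row `i` and column `j` deleted):
`|A|_{ij} = a_{ij} − ξ·(A^{ij})⁻¹·ζ`. -/
def qdCore {R : Type*} [Ring R] {n : ℕ} (A : Matrix (Fin (n+1)) (Fin (n+1)) R)
    (i j : Fin (n+1)) (C : Matrix (Fin n) (Fin n) R) : R :=
  A i j - ∑ l : Fin n, ∑ k : Fin n, A i (j.succAbove l) * C l k * A (i.succAbove k) j

/-- The principal submatrix of an `m × m` matrix `A` on rows and columns `s, s+1, …, m-1`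
(written with size `m - s - 1 + 1`, which equals `m - s`, so that its `(0,0)`
quasideterminant makes sense). -/
def prinSub {R : Type*} [Ring R] {m : ℕ} (A : Matrix (Fin m) (Fin m) R) (s : Fin m) :
    Matrix (Fin (m - s - 1 + 1)) (Fin (m - s - 1 + 1)) R :=
  Matrix.of fun t u => A ⟨s + t, by omega⟩ ⟨s + u, by omega⟩

/-! ### Laplace expansion along the first row -/

/-- The scalar `(-q)⁻¹`, as an element of the ring. -/
def negQInv {R : Type*} [Ring R] (q : Rˣ) : R := (((-q)⁻¹ : Rˣ) : R)

lemma negQInv_comm {R : Type*} [Ring R] (q : Rˣ) (hq : ∀ x : R, (q : R) * x = x * (q : R)) (x : R) :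
    Commute (negQInv q) x := by
  have h : Commute (((-q : Rˣ)) : R) x := by
    have : Commute (q : R) x := hq x
    simpa using this.neg_left
  exact h.units_inv_left

lemma qdet_eq {R : Type*} [Ring R] {n : ℕ} (q : Rˣ) (A : Matrix (Fin n) (Fin n) R) :
    qdet q A = ∑ σ : Equiv.Perm (Fin n),
      negQInv q ^ (tupleInv fun i => σ i) * (List.ofFn fun i => A i (σ i)).prod := by
  unfold qdet negQInv
  refine Finset.sum_congr rfl fun σ _ => ?_
  rw [zpow_neg, zpow_natCast, ← inv_pow, Units.val_pow_eq_pow_val]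

/-- The permutation of `Fin (n+1)` sending `0` to `j` and acting on the remaining points as `τ`,
via the order isomorphisms with the complements of `0` and `j`. -/
def extendPerm {n : ℕ} (x : Fin (n + 1) × Equiv.Perm (Fin n)) : Equiv.Perm (Fin (n + 1)) :=
  (finSuccEquiv' 0).trans ((Equiv.optionCongr x.2).trans (finSuccEquiv' x.1).symm)

lemma extendPerm_zero {n : ℕ} (j : Fin (n + 1)) (τ : Equiv.Perm (Fin n)) :
    extendPerm (j, τ) 0 = j := by
  simp [extendPerm]

lemma extendPerm_succ {n : ℕ} (j : Fin (n + 1)) (τ : Equiv.Perm (Fin n)) (k : Fin n) :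
    extendPerm (j, τ) k.succ = j.succAbove (τ k) := by
  have : finSuccEquiv' (0 : Fin (n + 1)) k.succ = some k := by
    rw [← Fin.succAbove_zero_apply, finSuccEquiv'_succAbove]
  simp [extendPerm, this]

lemma extendPerm_bijective (n : ℕ) :
    Function.Bijective (extendPerm (n := n)) := by
  rw [Fintype.bijective_iff_injective_and_card]
  constructor
  · rintro ⟨j, τ⟩ ⟨j', τ'⟩ h
    have h0 : j = j' := by
      rw [← extendPerm_zero j τ, h, extendPerm_zero]
    subst h0
    have : τ = τ' := by
      ext1 k
      apply Fin.succAbove_right_injective (p := j)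
      rw [← extendPerm_succ, h, extendPerm_succ]
    rw [this]
  · simp [Fintype.card_perm, Nat.factorial_succ]

lemma tupleInv_eq_sum {m : ℕ} (f : Fin m → Fin m) :
    tupleInv f = ∑ a : Fin m, ∑ b : Fin m, if a < b ∧ f b < f a then 1 else 0 := by
  rw [tupleInv, Finset.card_filter, ← Finset.univ_product_univ, Finset.sum_product]

/-- The value `j` at position `0` lies above exactly `j` later values, and the remaining
inversions are those of `τ`. -/
lemma tupleInv_extendPerm {n : ℕ} (j : Fin (n + 1)) (τ : Equiv.Perm (Fin n)) :
    (tupleInv fun i => extendPerm (j, τ) i) = (j : ℕ) + tupleInv fun i => τ i := by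
  rw [tupleInv_eq_sum, tupleInv_eq_sum, Fin.sum_univ_succ]
  congr 1
  · rw [Fin.sum_univ_succ]
    simp only [extendPerm_zero, extendPerm_succ, lt_self_iff_false, false_and, if_false, zero_add,
      Fin.succ_pos, true_and]
    rw [Equiv.sum_comp τ (fun b => if j.succAbove b < j then 1 else 0)]
    simp only [Fin.succAbove_lt_iff_castSucc_lt, Finset.sum_boole]
    simp only [Fin.lt_def, Fin.val_castSucc]
    rw [Fin.card_filter_val_lt]
    simp; omega
  · refine Finset.sum_congr rfl fun a _ => ?_
    rw [Fin.sum_univ_succ]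
    simp only [extendPerm_succ, Fin.not_lt_zero, false_and, if_false, zero_add,
      Fin.succ_lt_succ_iff, Fin.succAbove_lt_succAbove_iff]

lemma qdet_laplace {R : Type*} [Ring R] (q : Rˣ) (hq : ∀ x : R, (q : R) * x = x * (q : R))
    {n : ℕ} (A : Matrix (Fin (n + 1)) (Fin (n + 1)) R) :
    qdet q A = ∑ j : Fin (n + 1), A 0 j * (negQInv q ^ (j : ℕ) *
      qdet q (A.submatrix Fin.succ j.succAbove)) := by
  rw [qdet_eq, ← (extendPerm_bijective n).sum_comp, ← Finset.univ_product_univ,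
    Finset.sum_product]
  refine Finset.sum_congr rfl fun j _ => ?_
  rw [qdet_eq, Finset.mul_sum, Finset.mul_sum]
  refine Finset.sum_congr rfl fun τ _ => ?_
  rw [tupleInv_extendPerm, List.ofFn_succ, List.prod_cons, extendPerm_zero]
  simp only [extendPerm_succ, Matrix.submatrix_apply]
  rw [← mul_assoc (negQInv q ^ (j : ℕ)), ← pow_add, ← mul_assoc, ← mul_assoc]
  rw [((negQInv_comm q hq (A 0 j)).pow_left _).eq]

/-! ### Laplace expansion along the first two rows -/

/-- Deleting two columns in either order gives the same result. -/
lemma succAbove_comp_comm {m : ℕ} {a b : Fin (m + 1)} (h : a ≤ b) :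
    (b.succ.succAbove ∘ a.succAbove : Fin m → Fin (m + 2)) =
      a.castSucc.succAbove ∘ b.succAbove := by
  funext x
  simp only [Function.comp, Fin.succAbove, Fin.lt_def, Fin.le_def] at *
  ext
  split_ifs <;> simp_all <;> omega

/-- Ordered pairs of distinct elements of `Fin (m+2)`, grouped by the underlying unordered pair
`{a.castSucc, b.succ}` with `a ≤ b`. -/
lemma sum_pairs {R : Type*} [Ring R] {m : ℕ} (f : Fin (m + 2) → Fin (m + 1) → R) :
    ∑ j, ∑ l, f j l =
      ∑ a : Fin (m + 1), ∑ b : Fin (m + 1),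
        if a ≤ b then f a.castSucc b + f b.succ a else 0 := by
  have h1 : ∀ j l, f j l = (if j ≤ l.castSucc then f j l else 0) +
      (if l.castSucc < j then f j l else 0) := by
    intro j l
    by_cases h : j ≤ l.castSucc
    · simp [h, not_lt.mpr h]
    · simp [h, not_le.mp h]
  have h2 : ∑ j, ∑ l : Fin (m + 1), (if j ≤ l.castSucc then f j l else 0) =
      ∑ a : Fin (m + 1), ∑ b : Fin (m + 1), if a ≤ b then f a.castSucc b else 0 := by
    rw [Fin.sum_univ_castSucc]
    have : ∀ l : Fin (m + 1), ¬ (Fin.last (m + 1) ≤ l.castSucc) := fun l =>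
      not_le.mpr (Fin.castSucc_lt_last l)
    simp [this]
  have h3 : ∑ j, ∑ l : Fin (m + 1), (if l.castSucc < j then f j l else 0) =
      ∑ a : Fin (m + 1), ∑ b : Fin (m + 1), if a ≤ b then f b.succ a else 0 := by
    rw [Fin.sum_univ_succ, Finset.sum_comm (s := Finset.univ) (t := Finset.univ)
      (f := fun a b : Fin (m + 1) => if a ≤ b then f b.succ a else 0)]
    simp [Fin.castSucc_lt_succ_iff]
  calc ∑ j, ∑ l, f j l = ∑ j, ∑ l : Fin (m + 1), ((if j ≤ l.castSucc then f j l else 0) +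
      (if l.castSucc < j then f j l else 0)) := by simp only [← h1]
    _ = _ := by
      simp only [Finset.sum_add_distrib]
      rw [h2, h3, ← Finset.sum_add_distrib]
      refine Finset.sum_congr rfl fun a _ => ?_
      rw [← Finset.sum_add_distrib]
      refine Finset.sum_congr rfl fun b _ => ?_
      split_ifs <;> simp

/-- Laplace expansion along the first two rows, in terms of their `2 × 2` quantum minors. -/
lemma qdet_two_rows {R : Type*} [Ring R] (q : Rˣ) (hq : ∀ x : R, (q : R) * x = x * (q : R))
    {m : ℕ} (A : Matrix (Fin (m + 2)) (Fin (m + 2)) R) :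
    qdet q A = ∑ a : Fin (m + 1), ∑ b : Fin (m + 1), if a ≤ b then
      (A 0 a.castSucc * A 1 b.succ + negQInv q * (A 0 b.succ * A 1 a.castSucc)) *
        (negQInv q ^ (a + b : ℕ) * qdet q (A.submatrix (fun k => k.succ.succ)
          (a.castSucc.succAbove ∘ b.succAbove))) else 0 := by
  have key : qdet q A = ∑ j : Fin (m + 2), ∑ l : Fin (m + 1),
      (A 0 j * A 1 (j.succAbove l)) * (negQInv q ^ (j + l : ℕ) *
        qdet q (A.submatrix (fun k => k.succ.succ) (j.succAbove ∘ l.succAbove))) := by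
    rw [qdet_laplace q hq]
    refine Finset.sum_congr rfl fun j _ => ?_
    rw [qdet_laplace q hq, Finset.mul_sum, Finset.mul_sum]
    refine Finset.sum_congr rfl fun l _ => ?_
    have hc := ((negQInv_comm q hq (A 1 (j.succAbove l))).pow_left (j : ℕ)).eq
    simp only [Matrix.submatrix_apply, Matrix.submatrix_submatrix, Fin.succ_zero_eq_one, pow_add]
    rw [← mul_assoc (negQInv q ^ (j : ℕ)), hc]
    simp only [mul_assoc]
    rfl
  rw [key, sum_pairs]
  refine Finset.sum_congr rfl fun a _ => Finset.sum_congr rfl fun b _ => ?_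
  split_ifs with h
  · rw [succAbove_comp_comm h, add_mul]
    congr 1
    · rw [Fin.succAbove_castSucc_of_le _ _ h]
      rfl
    · rw [Fin.succAbove_succ_of_le _ _ h]
      have hc := (negQInv_comm q hq (A 0 b.succ * A 1 a.castSucc)).eq
      have he : ((b.succ : Fin (m + 2)) + a : ℕ) = 1 + (a + b : ℕ) := by simp; omega
      rw [he, hc, pow_add, pow_one]
      simp only [mul_assoc]
  · rfl

/-! ### Vanishing for a repeated row -/

lemma minor_eq_zero {R : Type*} [Ring R] (q : Rˣ) {n m : ℕ} (X : Matrix (Fin n) (Fin m) R)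
    (hX : qGeneric q X) (u : Fin n) {c d : Fin m} (h : c < d) :
    X u c * X u d + negQInv q * (X u d * X u c) = 0 := by
  rw [hX.1 u c d h, negQInv, ← mul_assoc]
  have : (((-q)⁻¹ : Rˣ) : R) * (q : R) = -1 := by simp [inv_neg]
  rw [this]; simp

/-- Exchanging two distinct rows multiplies every `2 × 2` quantum minor by the same
factor: `-q⁻¹` or `-q`, according to the order of the rows. -/
lemma minor_swap {R : Type*} [Ring R] (q : Rˣ) {n m : ℕ} (X : Matrix (Fin n) (Fin m) R)
    (hX : qGeneric q X) {u v : Fin n} (huv : u ≠ v) :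
    ∃ w : R, ∀ c d : Fin m, c < d →
      X u c * X v d + negQInv q * (X u d * X v c) =
        w * (X v c * X u d + negQInv q * (X v d * X u c)) := by
  have hp : negQInv q = -((q⁻¹ : Rˣ) : R) := by simp [negQInv, inv_neg]
  have key : ∀ u v : Fin n, u < v → ∀ c d : Fin m, c < d →
      X v c * X u d + negQInv q * (X v d * X u c) =
        negQInv q * (X u c * X v d + negQInv q * (X u d * X v c)) := by
    intro u v h c d hcd
    rw [hX.2.2.1 u v c d h hcd, hX.2.2.2 u v c d h hcd, hp]
    have h1 : ((q⁻¹ : Rˣ) : R) * (((q : R) - ((q⁻¹ : Rˣ) : R)) * (X u d * X v c)) =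
        X u d * X v c - ((q⁻¹ : Rˣ) : R) * (((q⁻¹ : Rˣ) : R) * (X u d * X v c)) := by
      rw [sub_mul, mul_sub, Units.inv_mul_cancel_left]
    simp only [mul_add, neg_mul, mul_neg, h1]
    abel
  rcases lt_or_gt_of_ne huv with h | h
  · refine ⟨((-q : Rˣ) : R), fun c d hcd => ?_⟩
    rw [key u v h c d hcd, negQInv, Units.mul_inv_cancel_left]
  · exact ⟨negQInv q, key v u h⟩

lemma qGeneric_columns {R : Type*} [Ring R] (q : Rˣ) {n m m' : ℕ} (X : Matrix (Fin n) (Fin m) R)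
    (hX : qGeneric q X) (f : Fin m' → Fin m) (hf : StrictMono f) :
    qGeneric q (X.submatrix id f) :=
  ⟨fun k _ _ h => hX.1 k _ _ (hf h), fun i j _ h => hX.2.1 i j _ h,
    fun i j _ _ h h' => hX.2.2.1 i j _ _ h (hf h'),
    fun i j _ _ h h' => hX.2.2.2 i j _ _ h (hf h')⟩

lemma qdet_repeated_row {R : Type*} [Ring R] (q : Rˣ)
    (hq : ∀ x : R, (q : R) * x = x * (q : R)) {n : ℕ} :
    ∀ {m : ℕ} (X : Matrix (Fin n) (Fin m) R), qGeneric q X → ∀ i : Fin m → Fin n,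
      ¬ Function.Injective i → qdet q (Matrix.of fun s t => X (i s) t) = 0 := by
  intro m
  induction m with
  | zero => exact fun X _ i hi => (hi (Function.injective_of_subsingleton i)).elim
  | succ m ih =>
    intro X hX
    have tail : ∀ i : Fin (m + 1) → Fin n, ¬ Function.Injective (fun k : Fin m => i k.succ) →
        qdet q (Matrix.of fun s t => X (i s) t) = 0 := by
      intro i hi
      rw [qdet_laplace q hq]
      refine Finset.sum_eq_zero fun j _ => ?_
      have := ih (X.submatrix id j.succAbove)
        (qGeneric_columns q X hX _ (Fin.strictMono_succAbove j)) (fun k => i k.succ) hi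
      have e : (Matrix.of fun s t => X (i s) t).submatrix Fin.succ j.succAbove =
        Matrix.of fun s t => X.submatrix id j.succAbove (i s.succ) t := rfl
      rw [e, this, mul_zero, mul_zero]
    intro i hi
    by_cases ht : Function.Injective (fun k : Fin m => i k.succ)
    swap
    · exact tail i ht
    -- The repetition involves row `0`.
    have hk : ∃ k : Fin m, i 0 = i k.succ := by
      by_contra! hne
      refine hi fun x y => ?_
      induction x using Fin.cases with
      | zero =>
        induction y using Fin.cases with
        | zero => simp
        | succ y => exact fun h => (hne y h).elim
      | succ x =>
        induction y using Fin.cases with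
        | zero => exact fun h => (hne x h.symm).elim
        | succ y => exact fun h => congrArg Fin.succ (ht h)
    obtain ⟨k, hk⟩ := hk
    obtain _ | m := m
    · exact k.elim0
    by_cases h01 : i 0 = i 1
    · rw [qdet_two_rows q hq]
      refine Finset.sum_eq_zero fun a _ => Finset.sum_eq_zero fun b _ => ?_
      split_ifs with hab
      · simp only [Matrix.of_apply]
        rw [h01, minor_eq_zero q X hX _ (Fin.castSucc_lt_succ_iff.mpr hab), zero_mul]
      · rfl
    · -- After exchanging rows `0` and `1`, the repetition lies in rows `1, 2, …`.
      obtain ⟨w, hw⟩ := minor_swap q X hX h01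
      set i' : Fin (m + 2) → Fin n := i ∘ Equiv.swap 0 1 with hi'
      have e0 : i' 0 = i 1 := by simp [hi']
      have e1 : i' 1 = i 0 := by simp [hi']
      have e2 : ∀ k : Fin m, i' k.succ.succ = i k.succ.succ := by
        intro k
        simp only [hi', Function.comp]
        rw [Equiv.swap_apply_of_ne_of_ne (Fin.succ_ne_zero _)]
        intro h
        rw [← Fin.succ_zero_eq_one] at h
        exact Fin.succ_ne_zero _ (Fin.succ_injective _ h)
      have hz : qdet q (Matrix.of fun s t => X (i' s) t) = 0 := by
        refine tail i' fun hinj => ?_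
        induction k using Fin.cases with
        | zero => exact h01 hk
        | succ k =>
          have : (0 : Fin (m + 1)) = k.succ := by
            apply hinj
            change i' 1 = i' k.succ.succ
            rw [e1, e2, hk]
          exact Fin.succ_ne_zero _ this.symm
      have hmul : qdet q (Matrix.of fun s t => X (i s) t) =
          w * qdet q (Matrix.of fun s t => X (i' s) t) := by
        rw [qdet_two_rows q hq, qdet_two_rows q hq, Finset.mul_sum]
        refine Finset.sum_congr rfl fun a _ => ?_
        rw [Finset.mul_sum]
        refine Finset.sum_congr rfl fun b _ => ?_
        split_ifs with hab
        · have er : (Matrix.of fun s t => X (i' s) t).submatrix (fun k : Fin m => k.succ.succ)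
              (a.castSucc.succAbove ∘ b.succAbove) =
              (Matrix.of fun s t => X (i s) t).submatrix (fun k : Fin m => k.succ.succ)
              (a.castSucc.succAbove ∘ b.succAbove) := by
            ext s t
            simp [e2]
          rw [er]
          simp only [Matrix.of_apply, e0, e1]
          rw [hw _ _ (Fin.castSucc_lt_succ_iff.mpr hab), mul_assoc]
        · simp
      rw [hmul, hz, mul_zero]

/-! ### Factorization into quasideterminants -/

/-- Splitting off the first quasideterminant. -/
lemma qdet_step {R : Type*} [Ring R] (q : Rˣ) (hq : ∀ x : R, (q : R) * x = x * (q : R))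
    {n m : ℕ} (X : Matrix (Fin n) (Fin (m + 1)) R) (hX : qGeneric q X) (i : Fin (m + 1) → Fin n)
    (C : Matrix (Fin m) (Fin m) R)
    (hC : C * (Matrix.of fun s t => X (i s) t).submatrix Fin.succ Fin.succ = 1) :
    qdet q (Matrix.of fun s t => X (i s) t) =
      qdCore (Matrix.of fun s t => X (i s) t) 0 0 C *
        qdet q ((Matrix.of fun s t => X (i s) t).submatrix Fin.succ Fin.succ) := by
  set A : Matrix (Fin (m + 1)) (Fin (m + 1)) R := Matrix.of fun s t => X (i s) t with hA
  set D := qdet q (A.submatrix Fin.succ Fin.succ) with hD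
  set v : Fin m → R := fun l => negQInv q ^ ((l.succ : Fin (m + 1)) : ℕ) *
    qdet q (A.submatrix Fin.succ l.succ.succAbove) with hv
  -- The Laplace expansion for an arbitrary first row `u` of `X` above rows `1, …, m` of `A`.
  have expand : ∀ u : Fin n, qdet q (Matrix.of fun s t => X ((Fin.cons u fun k => i k.succ :
      Fin (m + 1) → Fin n) s) t) = X u 0 * D + ∑ l, X u l.succ * v l := by
    intro u
    rw [qdet_laplace q hq, Fin.sum_univ_succ]
    simp only [Fin.val_zero, pow_zero, one_mul, Fin.succAbove_zero]
    rfl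
  have hBv : (A.submatrix Fin.succ Fin.succ).mulVec v = fun k => -(A k.succ 0 * D) := by
    funext k
    have h0 := qdet_repeated_row q hq X hX (Fin.cons (i k.succ) fun k => i k.succ) (by
      intro h
      exact Fin.succ_ne_zero k (h (a₁ := k.succ) (a₂ := 0) (by simp)))
    rw [expand] at h0
    exact eq_neg_of_add_eq_zero_right h0
  have hvC : v = fun l => -∑ k, C l k * (A k.succ 0 * D) := by
    have : C.mulVec ((A.submatrix Fin.succ Fin.succ).mulVec v) = v := by
      rw [Matrix.mulVec_mulVec, hC, Matrix.one_mulVec]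
    rw [← this, hBv]
    funext l
    simp [Matrix.mulVec, dotProduct]
  have hAi : A = Matrix.of fun s t => X ((Fin.cons (i 0) fun k => i k.succ :
      Fin (m + 1) → Fin n) s) t := by
    rw [hA]
    congr
    funext s
    induction s using Fin.cases <;> simp
  have hfirst : qdet q A = A 0 0 * D + ∑ l, A 0 l.succ * v l := by
    conv_lhs => rw [hAi]
    rw [expand]
    rfl
  rw [hfirst, hvC, qdCore, sub_mul, Finset.sum_mul, sub_eq_add_neg, ← Finset.sum_neg_distrib]
  congr 1
  refine Finset.sum_congr rfl fun l _ => ?_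
  rw [Finset.sum_mul, mul_neg, Finset.mul_sum]
  simp only [Fin.succAbove_zero, mul_assoc]

/-- The principal submatrix on rows and columns `s, …, s + d`, where `s + d + 1` is the size of `A`.
Keeping `d` as a free parameter avoids transports between the types `Fin (m + 1 - (s + 1))` and
`Fin (m - s)`. -/
def tailSub {R : Type*} {m : ℕ} (A : Matrix (Fin m) (Fin m) R) (s d : ℕ) (h : s + d + 1 = m) :
    Matrix (Fin (d + 1)) (Fin (d + 1)) R :=
  Matrix.of fun t u => A ⟨s + t, by omega⟩ ⟨s + u, by omega⟩

lemma tailSub_zero {R : Type*} {m : ℕ} (A : Matrix (Fin (m + 1)) (Fin (m + 1)) R)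
    (h : 0 + m + 1 = m + 1) : tailSub A 0 m h = A := by
  ext s t
  simp [tailSub]

lemma tailSub_succ {R : Type*} {m : ℕ} (A : Matrix (Fin (m + 1)) (Fin (m + 1)) R) (s d : ℕ)
    (h : s + 1 + d + 1 = m + 1) (h' : s + d + 1 = m) :
    tailSub A (s + 1) d h = tailSub (A.submatrix Fin.succ Fin.succ) s d h' := by
  ext t u
  simp only [tailSub, Matrix.of_apply, Matrix.submatrix_apply, Fin.succ_mk]
  congr 2 <;> omega

lemma qdet_step_cast {R : Type*} [Ring R] (q : Rˣ) (hq : ∀ x : R, (q : R) * x = x * (q : R))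
    {n m : ℕ} (X : Matrix (Fin n) (Fin (m + 1)) R) (hX : qGeneric q X) (i : Fin (m + 1) → Fin n)
    (d : ℕ) (h : 0 + d + 1 = m + 1) (C : Matrix (Fin d) (Fin d) R)
    (hC : C * (tailSub (Matrix.of fun s t => X (i s) t) 0 d h).submatrix Fin.succ Fin.succ = 1) :
    qdet q (Matrix.of fun s t => X (i s) t) =
      qdCore (tailSub (Matrix.of fun s t => X (i s) t) 0 d h) 0 0 C *
        qdet q ((Matrix.of fun s t => X (i s) t).submatrix Fin.succ Fin.succ) := by
  obtain rfl : d = m := by omega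
  rw [tailSub_zero] at hC ⊢
  exact qdet_step q hq X hX i C hC

lemma qdet_eq_prod {R : Type*} [Ring R] (q : Rˣ) (hq : ∀ x : R, (q : R) * x = x * (q : R))
    {n : ℕ} : ∀ {m : ℕ} (X : Matrix (Fin n) (Fin m) R), qGeneric q X → ∀ (i : Fin m → Fin n)
    (d : Fin m → ℕ) (hd : ∀ s : Fin m, (s : ℕ) + d s + 1 = m)
    (C : (s : Fin m) → Matrix (Fin (d s)) (Fin (d s)) R),
    (∀ s, C s * (tailSub (Matrix.of fun s t => X (i s) t) s (d s) (hd s)).submatrix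
      Fin.succ Fin.succ = 1) →
    qdet q (Matrix.of fun s t => X (i s) t) =
      (List.ofFn fun s : Fin m =>
        qdCore (tailSub (Matrix.of fun s t => X (i s) t) s (d s) (hd s)) 0 0 (C s)).prod := by
  intro m
  induction m with
  | zero =>
    intro X _ i d hd C _
    simp [qdet_eq, tupleInv]
  | succ m ih =>
    intro X hX i d hd C hC
    have hd' : ∀ s : Fin m, (s : ℕ) + d s.succ + 1 = m := fun s => by
      have := hd s.succ
      simp only [Fin.val_succ] at this
      omega
    have et : ∀ s : Fin m, tailSub (Matrix.of fun s t => X (i s) t) (s.succ : Fin (m + 1))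
        (d s.succ) (hd s.succ) = tailSub (Matrix.of fun s t => X.submatrix id Fin.succ (i s.succ) t)
          s (d s.succ) (hd' s) :=
      fun s => tailSub_succ _ _ _ (hd s.succ) (hd' s)
    rw [List.ofFn_succ, List.prod_cons]
    refine (qdet_step_cast q hq X hX i (d 0) (hd 0) (C 0) (hC 0)).trans (congrArg _ ?_)
    refine (ih (X.submatrix id Fin.succ) (qGeneric_columns q X hX _ (Fin.strictMono_succ))
      (fun s => i s.succ) (fun s => d s.succ) hd' (fun s => C s.succ) fun s => ?_).trans ?_
    · rw [← et s]
      exact hC s.succ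
    · simp only [et]

/-- If `A` is built from rows `i 0, …, i (m-1)` of an `n × m`
`q`-generic matrix `X`, and for each `s` the principal submatrix of `A` on rows and
columns `{s+1, …, m-1}` has a two-sided inverse `C s` (so that the principal
quasideterminants are defined), then `det_q A` is the ordered product
`|A|_{0,0} · |A^{0,0}|_{1,1} ⋯ a_{m-1,m-1}` of the successive principal
quasideterminants. -/
theorem stmt18 {R : Type*} [Ring R] (q : Rˣ) (hq : ∀ x : R, (q : R) * x = x * (q : R))
    {n m : ℕ} (X : Matrix (Fin n) (Fin m) R) (hX : qGeneric q X) (i : Fin m → Fin n)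
    (C : (s : Fin m) → Matrix (Fin (m - s - 1)) (Fin (m - s - 1)) R)
    (hC : ∀ s : Fin m,
      (prinSub (Matrix.of fun s' t => X (i s') t) s).submatrix
          (0 : Fin (m - s - 1 + 1)).succAbove (0 : Fin (m - s - 1 + 1)).succAbove * C s = 1 ∧
      C s * (prinSub (Matrix.of fun s' t => X (i s') t) s).submatrix
          (0 : Fin (m - s - 1 + 1)).succAbove (0 : Fin (m - s - 1 + 1)).succAbove = 1) :
    qdet q (Matrix.of fun s t => X (i s) t) =
      (List.ofFn fun s : Fin m =>
        qdCore (prinSub (Matrix.of fun s' t => X (i s') t) s) 0 0 (C s)).prod := by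
  refine qdet_eq_prod q hq X hX i (fun s => m - s - 1) (fun s => by have := s.2; omega) C
    fun s => ?_
  have := (hC s).2
  rw [Fin.succAbove_zero] at this
  exact this
end
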